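/- arXiv:2305.16068 — 3 statements merged into one kernel-verified Lean document; each statement's English description precedes it below -/
import Mathlib

section
/- Let μ be a measure, 1 < p ≤ 2, and let x, y ∈ L^p(μ) with x Birkhoff–James orthogonal to y (i.e., ‖x + βy‖_{L^p} ≥ ‖x‖_{L^p} for every scalar β ∈ ℂ). Then ‖x + y‖_{L^p}^p ≤ ‖x‖_{L^p}^p + (1/(2^{p-1} − 1))·‖y‖_{L^p}^p. -/
open MeasureTheory

lemma pusp_point (p : ℝ) (hp1 : 1 < p) (hp2 : p ≤ 2) (a b : ℂ) :
    ‖a + b‖ ^ p + ‖a - b‖ ^ p ≤ 2 * (‖a‖ ^ p + ‖b‖ ^ p) := by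
  have hsq : ∀ z : ℂ, ‖z‖ ^ p = (‖z‖ ^ 2) ^ (p / 2) := fun z => by
    rw [← Real.rpow_natCast, ← Real.rpow_mul (norm_nonneg _)]
    congr 1
    push_cast
    ring
  have hc := Real.concaveOn_rpow (p := p / 2) (by linarith) (by linarith)
  have m1 : ‖a + b‖ ^ 2 ∈ Set.Ici (0:ℝ) := Set.mem_Ici.2 (sq_nonneg _)
  have m2 : ‖a - b‖ ^ 2 ∈ Set.Ici (0:ℝ) := Set.mem_Ici.2 (sq_nonneg _)
  have hh : (0:ℝ) ≤ 1 / 2 := by norm_num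
  have h1 := hc.2 m1 m2 hh hh (by norm_num)
  have h2 := parallelogram_law_with_norm ℝ a b
  have h3 : (1 / 2 : ℝ) • ‖a + b‖ ^ 2 + (1 / 2 : ℝ) • ‖a - b‖ ^ 2 = ‖a‖ ^ 2 + ‖b‖ ^ 2 := by
    simp only [smul_eq_mul]
    nlinarith
  rw [h3] at h1
  have h4 := Real.rpow_add_le_add_rpow (p := p / 2) (sq_nonneg ‖a‖) (sq_nonneg ‖b‖)
    (by linarith) (by linarith)
  simp only [smul_eq_mul] at h1
  rw [hsq, hsq, hsq a, hsq b]
  linarith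

lemma pusp_norm {α : Type*} [MeasurableSpace α] (μ : Measure α)
    (p : ℝ) (hp1 : 1 < p) (x : Lp ℂ (ENNReal.ofReal p) μ) :
    Integrable (fun a => ‖x a‖ ^ p) μ ∧ ‖x‖ ^ p = ∫ a, ‖x a‖ ^ p ∂μ := by
  have h0 : ENNReal.ofReal p ≠ 0 := by simp; linarith
  have ht : (ENNReal.ofReal p).toReal = p := ENNReal.toReal_ofReal (by linarith)
  have hx := Lp.memLp x
  have hi := hx.integrable_norm_rpow h0 ENNReal.ofReal_ne_top
  rw [ht] at hi
  refine ⟨hi, ?_⟩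
  have hn : 0 ≤ ∫ a, ‖x a‖ ^ p ∂μ := integral_nonneg fun a => by positivity
  rw [Lp.norm_def, hx.eLpNorm_eq_integral_rpow_norm h0 ENNReal.ofReal_ne_top, ht,
    ENNReal.toReal_ofReal (by positivity), ← Real.rpow_mul hn, inv_mul_cancel₀ (by linarith),
    Real.rpow_one]

lemma pusp_clarkson {α : Type*} [MeasurableSpace α] (μ : Measure α)
    (p : ℝ) (hp1 : 1 < p) (hp2 : p ≤ 2) (x y : Lp ℂ (ENNReal.ofReal p) μ) :
    ‖x + y‖ ^ p + ‖x - y‖ ^ p ≤ 2 * (‖x‖ ^ p + ‖y‖ ^ p) := by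
  obtain ⟨i1, e1⟩ := pusp_norm μ p hp1 (x + y)
  obtain ⟨i2, e2⟩ := pusp_norm μ p hp1 (x - y)
  obtain ⟨i3, e3⟩ := pusp_norm μ p hp1 x
  obtain ⟨i4, e4⟩ := pusp_norm μ p hp1 y
  rw [e1, e2, e3, e4, ← integral_add i1 i2, ← integral_add i3 i4, ← integral_const_mul]
  refine integral_mono_ae (i1.add i2) ((i3.add i4).const_mul 2) ?_
  filter_upwards [Lp.coeFn_add x y, Lp.coeFn_sub x y] with a h1 h2
  simp only [h1, h2, Pi.add_apply, Pi.sub_apply]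
  exact pusp_point p hp1 hp2 _ _

lemma pusp_iter {α : Type*} [MeasurableSpace α] (μ : Measure α)
    (p : ℝ) (hp1 : 1 < p) (hp2 : p ≤ 2) (r K : ℝ) (hr : r = 2 * (1 / 2) ^ p)
    (hK : r * K + r = K)
    (x : Lp ℂ (ENNReal.ofReal p) μ) (n : ℕ) : ∀ (y : Lp ℂ (ENNReal.ofReal p) μ)
    (_ : ∀ β : ℂ, ‖x‖ ≤ ‖x + β • y‖),
    ‖x + y‖ ^ p ≤ ‖x‖ ^ p + (K + 2 * r ^ n) * ‖y‖ ^ p := by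
  have : Fact (1 ≤ ENNReal.ofReal p) := ⟨by simpa using hp1.le⟩
  have hr0 : 0 < r := by rw [hr]; positivity
  have hhalf : ∀ z : Lp ℂ (ENNReal.ofReal p) μ,
      2 * ‖(1 / 2 : ℂ) • z‖ ^ p = r * ‖z‖ ^ p := fun z => by
    rw [norm_smul, Real.mul_rpow (norm_nonneg _) (norm_nonneg _), hr]
    norm_num
    ring
  have hr1 : r < 1 := by
    have : ((1:ℝ) / 2) ^ p < (1 / 2) ^ (1:ℝ) :=
      Real.rpow_lt_rpow_of_exponent_gt (by norm_num) (by norm_num) hp1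
    rw [Real.rpow_one] at this
    linarith
  have hK0 : 0 ≤ K := by
    by_contra h
    nlinarith
  induction n with
  | zero =>
    intro y h
    have h1 := pusp_clarkson μ p hp1 hp2 x y
    have h2 := h (-1)
    rw [neg_one_smul, ← sub_eq_add_neg] at h2
    have h3 := Real.rpow_le_rpow (norm_nonneg _) h2 (by linarith : 0 ≤ p)
    have : 0 ≤ K * ‖y‖ ^ p := by positivity
    rw [pow_zero]
    linarith
  | succ n ih =>
    intro y h
    have h1 := ih ((1 / 2 : ℂ) • y) (fun β => by rw [smul_smul]; exact h _)
    have h2 := pusp_clarkson μ p hp1 hp2 (x + (1 / 2 : ℂ) • y) ((1 / 2 : ℂ) • y)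
    have e1 : x + (1 / 2 : ℂ) • y + (1 / 2 : ℂ) • y = x + y := by
      rw [add_assoc, ← add_smul]; norm_num
    rw [e1, add_sub_cancel_right] at h2
    have h3 := hhalf y
    have h4 : (K + 2 * r ^ n) * (2 * ‖(1 / 2 : ℂ) • y‖ ^ p)
        = (K + 2 * r ^ n) * (r * ‖y‖ ^ p) := by rw [h3]
    have h5 : (K + 2 * r ^ (n + 1)) * ‖y‖ ^ p
        = (K + 2 * r ^ n) * (r * ‖y‖ ^ p) + r * ‖y‖ ^ p := by
      rw [pow_succ]
      linear_combination (-‖y‖ ^ p) * hK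
    rw [h5]
    linarith

/-- Lower Pythagorean-type inequality fails... Upper Pythagorean inequality for `1 < p ≤ 2`:
if `x` is Birkhoff–James orthogonal to `y` in `L^p(μ)`, then
`‖x + y‖^p ≤ ‖x‖^p + (1/(2^{p-1} − 1))·‖y‖^p`. -/
theorem pythag_upper_small_p {α : Type*} [MeasurableSpace α] (μ : Measure α)
    (p : ℝ) (hp1 : 1 < p) (hp2 : p ≤ 2)
    (x y : Lp ℂ (ENNReal.ofReal p) μ)
    (horth : ∀ β : ℂ, ‖x‖ ≤ ‖x + β • y‖) :
    ‖x + y‖ ^ p ≤ ‖x‖ ^ p + (1 / (2 ^ (p - 1) - 1)) * ‖y‖ ^ p := by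
  have hs : (1:ℝ) < 2 ^ (p - 1) := Real.one_lt_rpow (by norm_num) (by linarith)
  have hr : ((2:ℝ) ^ (p - 1))⁻¹ = 2 * (1 / 2) ^ p := by
    rw [Real.rpow_sub (by norm_num), Real.rpow_one, one_div, Real.inv_rpow (by norm_num), inv_div]
    rfl
  generalize (2:ℝ) ^ (p - 1) = s at hs hr
  have h := fun n => pusp_iter μ p hp1 hp2 s⁻¹ (1 / (s - 1)) hr
    (by have : s - 1 ≠ 0 := by linarith
        have : s ≠ 0 := by linarith
        field_simp
        ring) x n y horth
  have ht : Filter.Tendsto (fun n : ℕ => ‖x‖ ^ p + (1 / (s - 1) + 2 * s⁻¹ ^ n) * ‖y‖ ^ p)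
      Filter.atTop (nhds (‖x‖ ^ p + (1 / (s - 1) + 2 * 0) * ‖y‖ ^ p)) := by
    have := tendsto_pow_atTop_nhds_zero_of_lt_one (r := s⁻¹) (by positivity)
      (inv_lt_one_of_one_lt₀ hs)
    exact (((this.const_mul 2).const_add _).mul_const _).const_add _
  have := ge_of_tendsto' ht h
  simpa using this
end

section
/- Let μ be a measure, 1 < p ≤ 2, and let x, y ∈ L^p(μ) with x Birkhoff–James orthogonal to y (i.e., ‖x + βy‖_{L^p} ≥ ‖x‖_{L^p} for every scalar β ∈ ℂ). Then ‖x + y‖_{L^p}^2 ≥ ‖x‖_{L^p}^2 + (p − 1)·‖y‖_{L^p}^2. -/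
open MeasureTheory

lemma aux_g1 (q : ℝ) (hq0 : 0 < q) (hq1 : q ≤ 1) (t : ℝ) (ht0 : 0 ≤ t) (ht1 : t ≤ 1) :
    2 * q * t ≤ (1 + t) ^ q - (1 - t) ^ q := by
  let h : ℝ → ℝ := fun t => (1 + t) ^ q - (1 - t) ^ q - 2 * q * t
  have hder : ∀ s ∈ Set.Ioo (0:ℝ) 1, HasDerivAt h
      (q * (1 + s) ^ (q-1) + q * (1 - s) ^ (q-1) - 2 * q) s := by
    intro s hs
    have h1 : HasDerivAt (fun t : ℝ => (1 + t) ^ q) (1 * q * (1 + s) ^ (q-1)) s :=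
      ((hasDerivAt_id s).const_add 1).rpow_const (Or.inl (by simp only [id]; linarith [hs.1]))
    have h2 : HasDerivAt (fun t : ℝ => (1 - t) ^ q) (-1 * q * (1 - s) ^ (q-1)) s :=
      ((hasDerivAt_id s).const_sub 1).rpow_const (Or.inl (by simp only [id]; linarith [hs.2]))
    have h3 : HasDerivAt (fun t : ℝ => 2 * q * t) (2 * q * 1) s := (hasDerivAt_id s).const_mul _
    exact ((h1.sub h2).sub h3).congr_deriv (by ring)
  have hm : MonotoneOn h (Set.Icc 0 1) := by
    apply monotoneOn_of_deriv_nonneg (convex_Icc 0 1)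
    · apply ContinuousOn.sub (ContinuousOn.sub _ _) (by fun_prop)
      · exact ContinuousOn.rpow_const (by fun_prop) (fun _ _ => Or.inr hq0.le)
      · exact ContinuousOn.rpow_const (by fun_prop) (fun _ _ => Or.inr hq0.le)
    · rw [interior_Icc]
      exact fun s hs => (hder s hs).differentiableAt.differentiableWithinAt
    · rw [interior_Icc]
      intro s hs
      rw [(hder s hs).deriv]
      have hs0 := hs.1
      have hs1 := hs.2
      set u := (1 + s) ^ (q-1)
      set v := (1 - s) ^ (q-1)
      have hu : 0 < u := Real.rpow_pos_of_pos (by linarith) _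
      have hv : 0 < v := Real.rpow_pos_of_pos (by linarith) _
      have huv : 1 ≤ u * v := by
        rw [← Real.mul_rpow (by linarith) (by linarith)]
        apply Real.one_le_rpow_of_pos_of_le_one_of_nonpos <;> nlinarith
      have : 2 ≤ u + v := by nlinarith [sq_nonneg (u - v)]
      nlinarith
  have := hm (Set.left_mem_Icc.2 zero_le_one) ⟨ht0, ht1⟩ ht0
  simp only [h] at this
  norm_num at this
  linarith

lemma aux_g2 (p : ℝ) (hp1 : 1 < p) (hp2 : p ≤ 2) (t : ℝ) (ht0 : 0 ≤ t) (ht1 : t ≤ 1) :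
    2 + p * (p - 1) * t ^ 2 ≤ (1 + t) ^ p + (1 - t) ^ p := by
  let h : ℝ → ℝ := fun t => (1 + t) ^ p + (1 - t) ^ p - p * (p - 1) * t ^ 2
  have hder : ∀ s ∈ Set.Ioo (0:ℝ) 1, HasDerivAt h
      (p * ((1 + s) ^ (p-1) - (1 - s) ^ (p-1) - 2 * (p-1) * s)) s := by
    intro s hs
    have h1 : HasDerivAt (fun t : ℝ => (1 + t) ^ p) (1 * p * (1 + s) ^ (p-1)) s :=
      ((hasDerivAt_id s).const_add 1).rpow_const (Or.inl (by simp only [id]; linarith [hs.1]))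
    have h2 : HasDerivAt (fun t : ℝ => (1 - t) ^ p) (-1 * p * (1 - s) ^ (p-1)) s :=
      ((hasDerivAt_id s).const_sub 1).rpow_const (Or.inl (by simp only [id]; linarith [hs.2]))
    have h3 : HasDerivAt (fun t : ℝ => p * (p - 1) * t ^ 2) (p * (p - 1) * (2 * s)) s := by
      simpa using (hasDerivAt_pow 2 s).const_mul (p * (p - 1))
    exact ((h1.add h2).sub h3).congr_deriv (by ring)
  have hm : MonotoneOn h (Set.Icc 0 1) := by
    apply monotoneOn_of_deriv_nonneg (convex_Icc 0 1)
    · apply ContinuousOn.sub (ContinuousOn.add _ _) (by fun_prop)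
      · exact ContinuousOn.rpow_const (by fun_prop) (fun _ _ => Or.inr (by linarith))
      · exact ContinuousOn.rpow_const (by fun_prop) (fun _ _ => Or.inr (by linarith))
    · rw [interior_Icc]
      exact fun s hs => (hder s hs).differentiableAt.differentiableWithinAt
    · rw [interior_Icc]
      intro s hs
      rw [(hder s hs).deriv]
      have := aux_g1 (p-1) (by linarith) (by linarith) s hs.1.le hs.2.le
      apply mul_nonneg <;> linarith
  have := hm (Set.left_mem_Icc.2 zero_le_one) ⟨ht0, ht1⟩ ht0
  simp only [h] at this
  norm_num at this
  linarith

lemma aux_real' (p : ℝ) (hp1 : 1 < p) (hp2 : p ≤ 2) (a b : ℝ) (hb : 0 ≤ b) (hab : b ≤ a) :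
    2 * (a ^ 2 + (p - 1) * b ^ 2) ^ (p / 2) ≤ (a + b) ^ p + (a - b) ^ p := by
  rcases (hb.trans hab).eq_or_lt with h0 | ha
  · subst h0
    have : b = 0 := le_antisymm hab hb
    subst this
    simp [Real.zero_rpow (show p / 2 ≠ 0 by linarith), Real.zero_rpow (show p ≠ 0 by linarith)]
  · obtain ⟨t, rfl⟩ : ∃ t, b = a * t := ⟨b / a, by field_simp⟩
    have ht0 : 0 ≤ t := nonneg_of_mul_nonneg_right hb ha
    have ht1 : t ≤ 1 := by nlinarith
    have e1 : a ^ 2 + (p - 1) * (a * t) ^ 2 = a ^ 2 * (1 + (p-1) * t ^ 2) := by ring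
    have e2 : a + a * t = a * (1 + t) := by ring
    have e3 : a - a * t = a * (1 - t) := by ring
    have hnn : 0 ≤ (p-1) * t ^ 2 := mul_nonneg (by linarith) (sq_nonneg _)
    have e4 : (a ^ 2) ^ (p / 2) = a ^ p := by
      rw [← Real.rpow_natCast, ← Real.rpow_mul ha.le]; congr 1; push_cast; ring
    rw [e1, e2, e3, Real.mul_rpow (by positivity) (by linarith), Real.mul_rpow ha.le (by linarith),
      Real.mul_rpow ha.le (by linarith), e4]
    have h1 := aux_g2 p hp1 hp2 t ht0 ht1
    have h2 := rpow_one_add_le_one_add_mul_self (s := (p-1) * t ^ 2) (by linarith)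
      (p := p / 2) (by linarith) (by linarith)
    have h3 : 0 < a ^ p := Real.rpow_pos_of_pos ha _
    nlinarith

lemma aux_conc (r : ℝ) (hr0 : 0 ≤ r) (hr1 : r ≤ 1) (s d D : ℝ) (hd : |d| ≤ D) (hD : D ≤ s) :
    (s + D) ^ r + (s - D) ^ r ≤ (s + d) ^ r + (s - d) ^ r := by
  have hc := (Real.concaveOn_rpow hr0 hr1).2
  obtain ⟨hd1, hd2⟩ := abs_le.1 hd
  rcases (abs_nonneg d |>.trans hd).eq_or_lt with h0 | hD0
  · subst h0
    have : d = 0 := by linarith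
    subst this; exact le_rfl
  have m1 : s + D ∈ Set.Ici (0:ℝ) := by simp only [Set.mem_Ici]; linarith
  have m2 : s - D ∈ Set.Ici (0:ℝ) := by simp only [Set.mem_Ici]; linarith
  have l1 : 0 ≤ (D + d) / (2 * D) := div_nonneg (by linarith) (by linarith)
  have l2 : 0 ≤ (D - d) / (2 * D) := div_nonneg (by linarith) (by linarith)
  have l3 : (D + d) / (2 * D) + (D - d) / (2 * D) = 1 := by field_simp; ring
  have h1 := hc m1 m2 l1 l2 l3
  have h2 := hc m1 m2 l2 l1 (by linarith)
  simp only [smul_eq_mul] at h1 h2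
  have e1 : (D + d) / (2 * D) * (s + D) + (D - d) / (2 * D) * (s - D) = s + d := by
    field_simp; ring
  have e2 : (D - d) / (2 * D) * (s + D) + (D + d) / (2 * D) * (s - D) = s - d := by
    field_simp; ring
  rw [e1] at h1
  rw [e2] at h2
  have : (D - d) / (2 * D) = 1 - (D + d) / (2 * D) := by linarith
  rw [this] at h1 h2
  linarith

lemma sq_rpow_half (p a : ℝ) (ha : 0 ≤ a) : (a ^ 2) ^ (p / 2) = a ^ p := by
  rw [← Real.rpow_natCast, ← Real.rpow_mul ha]; congr 1; push_cast; ring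

lemma aux_complex (p : ℝ) (hp1 : 1 < p) (hp2 : p ≤ 2) (a b : ℂ) :
    2 * (‖a‖ ^ 2 + (p - 1) * ‖b‖ ^ 2) ^ (p / 2) ≤ ‖a + b‖ ^ p + ‖a - b‖ ^ p := by
  have e1 : ‖a + b‖ ^ 2 = (‖a‖ ^ 2 + ‖b‖ ^ 2) + 2 * inner ℝ a b := by
    rw [norm_add_sq_real]; ring
  have e2 : ‖a - b‖ ^ 2 = (‖a‖ ^ 2 + ‖b‖ ^ 2) - 2 * inner ℝ a b := by
    rw [norm_sub_sq_real]; ring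
  have hi := abs_real_inner_le_norm a b
  rw [← sq_rpow_half p _ (norm_nonneg (a + b)), ← sq_rpow_half p _ (norm_nonneg (a - b)), e1, e2]
  refine le_trans ?_ (aux_conc (p/2) (by linarith) (by linarith) (‖a‖ ^ 2 + ‖b‖ ^ 2)
    (2 * inner ℝ a b) (2 * (‖a‖ * ‖b‖)) (by rw [abs_mul, abs_two]; linarith)
    (by nlinarith [sq_nonneg (‖a‖ - ‖b‖)]))
  generalize ha : ‖a‖ = A
  generalize hb : ‖b‖ = B
  have hA : 0 ≤ A := ha ▸ norm_nonneg a
  have hB : 0 ≤ B := hb ▸ norm_nonneg b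
  rcases le_total B A with h | h
  · have e3 : A ^ 2 + B ^ 2 + 2 * (A * B) = (A + B) ^ 2 := by ring
    have e4 : A ^ 2 + B ^ 2 - 2 * (A * B) = (A - B) ^ 2 := by ring
    rw [e3, e4, sq_rpow_half _ _ (by linarith), sq_rpow_half _ _ (by linarith)]
    exact aux_real' p hp1 hp2 A B hB h
  · have e3 : A ^ 2 + B ^ 2 + 2 * (A * B) = (B + A) ^ 2 := by ring
    have e4 : A ^ 2 + B ^ 2 - 2 * (A * B) = (B - A) ^ 2 := by ring
    rw [e3, e4, sq_rpow_half _ _ (by linarith), sq_rpow_half _ _ (by linarith)]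
    refine le_trans ?_ (aux_real' p hp1 hp2 B A hA h)
    have : A ^ 2 ≤ B ^ 2 := by gcongr
    have h5 : (0:ℝ) ≤ (p-1) * B ^ 2 := mul_nonneg (by linarith) (sq_nonneg _)
    gcongr 2 * ?_
    apply Real.rpow_le_rpow (by positivity) (by nlinarith) (by linarith)

/-- pointwise bound after weighted concavity -/
lemma aux_point (p : ℝ) (hp1 : 1 < p) (hp2 : p ≤ 2) (a b : ℂ) (M N : ℝ) (hM : 0 < M)
    (hN : 0 < N) :
    2 * ((M ^ 2 + (p - 1) * N ^ 2) ^ (p / 2) *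
      ((M ^ 2 / (M ^ 2 + (p - 1) * N ^ 2)) * (‖a‖ ^ p / M ^ p) +
       ((p - 1) * N ^ 2 / (M ^ 2 + (p - 1) * N ^ 2)) * (‖b‖ ^ p / N ^ p)))
      ≤ ‖a + b‖ ^ p + ‖a - b‖ ^ p := by
  refine le_trans ?_ (aux_complex p hp1 hp2 a b)
  have hq : 0 < p - 1 := by linarith
  have hW : 0 < M ^ 2 + (p - 1) * N ^ 2 := by positivity
  have hc := (Real.concaveOn_rpow (p := p / 2) (by linarith) (by linarith)).2
  have h := hc (x := ‖a‖ ^ 2 / M ^ 2) (y := ‖b‖ ^ 2 / N ^ 2)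
    (by simp only [Set.mem_Ici]; positivity) (by simp only [Set.mem_Ici]; positivity)
    (a := M ^ 2 / (M ^ 2 + (p - 1) * N ^ 2)) (b := (p - 1) * N ^ 2 / (M ^ 2 + (p - 1) * N ^ 2))
    (by positivity) (by positivity) (by field_simp)
  simp only [smul_eq_mul] at h
  rw [Real.div_rpow (by positivity) (by positivity), Real.div_rpow (by positivity) (by positivity),
    sq_rpow_half _ _ (norm_nonneg _), sq_rpow_half _ _ (norm_nonneg _), sq_rpow_half _ _ hM.le,
    sq_rpow_half _ _ hN.le] at h
  have e : ‖a‖ ^ 2 + (p - 1) * ‖b‖ ^ 2 = (M ^ 2 + (p - 1) * N ^ 2) *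
      (M ^ 2 / (M ^ 2 + (p - 1) * N ^ 2) * (‖a‖ ^ 2 / M ^ 2) +
      (p - 1) * N ^ 2 / (M ^ 2 + (p - 1) * N ^ 2) * (‖b‖ ^ 2 / N ^ 2)) := by
    field_simp
  rw [e, Real.mul_rpow hW.le (by positivity)]
  gcongr

section
variable {α : Type*} [MeasurableSpace α] {μ : Measure α}

lemma aux_norm (p : ℝ) (hp1 : 1 < p) (f : Lp ℂ (ENNReal.ofReal p) μ) :
    Integrable (fun t => ‖f t‖ ^ p) μ ∧ ∫ t, ‖f t‖ ^ p ∂μ = ‖f‖ ^ p := by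
  have hp0 : 0 < p := by linarith
  have h0 : ENNReal.ofReal p ≠ 0 := by simpa using hp0
  have hf := Lp.memLp f
  have ht : (ENNReal.ofReal p).toReal = p := ENNReal.toReal_ofReal hp0.le
  have hi := hf.integrable_norm_rpow h0 ENNReal.ofReal_ne_top
  rw [ht] at hi
  refine ⟨hi, ?_⟩
  have hnn : 0 ≤ ∫ t, ‖f t‖ ^ p ∂μ := integral_nonneg fun t => by positivity
  rw [Lp.norm_def, hf.eLpNorm_eq_integral_rpow_norm h0 ENNReal.ofReal_ne_top, ht,
    ENNReal.toReal_ofReal (by positivity), ← Real.rpow_mul hnn, inv_mul_cancel₀ hp0.ne',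
    Real.rpow_one]

lemma aux_uc (p : ℝ) (hp1 : 1 < p) (hp2 : p ≤ 2) (a b : Lp ℂ (ENNReal.ofReal p) μ) :
    2 * (‖a‖ ^ 2 + (p - 1) * ‖b‖ ^ 2) ≤ ‖a + b‖ ^ 2 + ‖a - b‖ ^ 2 := by
  have : Fact (1 ≤ ENNReal.ofReal p) := ⟨by simpa using hp1.le⟩
  have hq : 0 < p - 1 := by linarith
  rcases eq_or_ne a 0 with rfl | ha
  · simp only [norm_zero, zero_add, zero_sub, norm_neg]
    nlinarith [sq_nonneg ‖b‖]
  rcases eq_or_ne b 0 with rfl | hb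
  · simp only [norm_zero, add_zero, sub_zero]
    nlinarith
  have hM : 0 < ‖a‖ := norm_pos_iff.2 ha
  have hN : 0 < ‖b‖ := norm_pos_iff.2 hb
  obtain ⟨ia, ea⟩ := aux_norm p hp1 a
  obtain ⟨ib, eb⟩ := aux_norm p hp1 b
  obtain ⟨ip, ep⟩ := aux_norm p hp1 (a + b)
  obtain ⟨im, em⟩ := aux_norm p hp1 (a - b)
  set W := ‖a‖ ^ 2 + (p - 1) * ‖b‖ ^ 2 with hWdef
  have hW : 0 < W := by positivity
  have key := integral_mono_ae (μ := μ) (f := fun t => 2 * (W ^ (p / 2) *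
      ((‖a‖ ^ 2 / W) * (‖a t‖ ^ p / ‖a‖ ^ p) +
       ((p - 1) * ‖b‖ ^ 2 / W) * (‖b t‖ ^ p / ‖b‖ ^ p))))
    (g := fun t => ‖(a + b : Lp ℂ (ENNReal.ofReal p) μ) t‖ ^ p
      + ‖(a - b : Lp ℂ (ENNReal.ofReal p) μ) t‖ ^ p)
    (((((ia.div_const _).const_mul _).add ((ib.div_const _).const_mul _)).const_mul _).const_mul _)
    (ip.add im) (by
      filter_upwards [Lp.coeFn_add a b, Lp.coeFn_sub a b] with t h1 h2
      rw [h1, h2]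
      exact aux_point p hp1 hp2 (a t) (b t) ‖a‖ ‖b‖ hM hN)
  rw [integral_add ip im, ep, em, integral_const_mul, integral_const_mul,
    integral_add ((ia.div_const _).const_mul _) ((ib.div_const _).const_mul _),
    integral_const_mul, integral_const_mul, integral_div, integral_div, ea, eb,
    div_self (by positivity), div_self (by positivity), mul_one, mul_one, ← add_div, ← hWdef,
    div_self hW.ne', mul_one] at key
  have hc := (Real.concaveOn_rpow (p := p / 2) (by linarith) (by linarith)).2
  have h := hc (x := ‖a + b‖ ^ 2) (y := ‖a - b‖ ^ 2)
    (by simp only [Set.mem_Ici]; positivity) (by simp only [Set.mem_Ici]; positivity)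
    (a := 1 / 2) (b := 1 / 2) (by norm_num) (by norm_num) (by norm_num)
  simp only [smul_eq_mul] at h
  rw [sq_rpow_half _ _ (norm_nonneg _), sq_rpow_half _ _ (norm_nonneg _)] at h
  have h2 : W ^ (p / 2) ≤ (1 / 2 * ‖a + b‖ ^ 2 + 1 / 2 * ‖a - b‖ ^ 2) ^ (p / 2) := by linarith
  have h3 := (Real.rpow_le_rpow_iff hW.le (by positivity) (by linarith)).1 h2
  linarith

end

/-- Lower Pythagorean inequality for `1 < p ≤ 2`: if `x` is Birkhoff–James orthogonal to `y`
in `L^p(μ)`, then `‖x + y‖² ≥ ‖x‖² + (p − 1)·‖y‖²`. -/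
theorem pythag_lower_small_p {α : Type*} [MeasurableSpace α] (μ : Measure α)
    (p : ℝ) (hp1 : 1 < p) (hp2 : p ≤ 2)
    (x y : Lp ℂ (ENNReal.ofReal p) μ)
    (horth : ∀ β : ℂ, ‖x‖ ≤ ‖x + β • y‖) :
    ‖x + y‖ ^ 2 ≥ ‖x‖ ^ 2 + (p - 1) * ‖y‖ ^ 2 := by
  have : Fact (1 ≤ ENNReal.ofReal p) := ⟨by simpa using hp1.le⟩
  have step : ∀ n : ℕ, (2:ℝ) ^ n * (‖x + ((1 / 2 : ℂ) ^ n) • y‖ ^ 2 - ‖x‖ ^ 2)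
      - (p - 1) * (1 / 2) ^ n * ‖y‖ ^ 2 ≤ ‖x + y‖ ^ 2 - ‖x‖ ^ 2 - (p - 1) * ‖y‖ ^ 2 := by
    intro n
    induction n with
    | zero => simp
    | succ n ih =>
      refine le_trans ?_ ih
      have h := aux_uc p hp1 hp2 (x + ((1 / 2 : ℂ) ^ (n+1)) • y) (((1 / 2 : ℂ) ^ (n+1)) • y)
      have e1 : x + ((1 / 2 : ℂ) ^ (n+1)) • y + ((1 / 2 : ℂ) ^ (n+1)) • y
          = x + ((1 / 2 : ℂ) ^ n) • y := by
        rw [add_assoc, ← add_smul]; congr 2; ring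
      rw [e1, add_sub_cancel_right, norm_smul] at h
      have e2 : ‖(1 / 2 : ℂ) ^ (n+1)‖ = (1 / 2) ^ (n+1) := by simp
      rw [e2] at h
      have h2 := mul_le_mul_of_nonneg_left h (show (0:ℝ) ≤ 2 ^ n by positivity)
      have e3 : (2:ℝ) ^ n * (1 / 2) ^ n = 1 := by rw [← mul_pow]; norm_num
      have e5 : (2:ℝ) ^ (n+1) = 2 ^ n * 2 := pow_succ _ _
      have e6 : (1 / 2 : ℝ) ^ (n+1) = (1 / 2) ^ n * (1 / 2) := pow_succ _ _
      rw [e5, e6]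
      rw [e6] at h2
      generalize ‖x + (1 / 2 : ℂ) ^ (n+1) • y‖ ^ 2 = P at *
      generalize ‖x + (1 / 2 : ℂ) ^ n • y‖ ^ 2 = Q at *
      generalize (2:ℝ) ^ n = u at *
      generalize (1 / 2 : ℝ) ^ n = v at *
      have e4 : u * (2 * ((p - 1) * (v * (1 / 2) * ‖y‖) ^ 2)) = (p - 1) * v * ‖y‖ ^ 2 / 2 := by
        linear_combination (p - 1) * v * ‖y‖ ^ 2 / 2 * e3
      linarith
  have lower : ∀ n : ℕ, - ((p - 1) * (1 / 2) ^ n * ‖y‖ ^ 2)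
      ≤ ‖x + y‖ ^ 2 - ‖x‖ ^ 2 - (p - 1) * ‖y‖ ^ 2 := by
    intro n
    refine le_trans ?_ (step n)
    have : ‖x‖ ^ 2 ≤ ‖x + ((1 / 2 : ℂ) ^ n) • y‖ ^ 2 := by gcongr; exact horth _
    have := mul_nonneg (show (0:ℝ) ≤ 2 ^ n by positivity) (sub_nonneg.2 this)
    linarith
  have lim : Filter.Tendsto (fun n : ℕ => - ((p - 1) * (1 / 2 : ℝ) ^ n * ‖y‖ ^ 2))
      Filter.atTop (nhds (- ((p - 1) * 0 * ‖y‖ ^ 2))) :=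
    (((tendsto_pow_atTop_nhds_zero_of_lt_one (by norm_num) (by norm_num)).const_mul _).mul_const
      _).neg
  have h := le_of_tendsto' lim lower
  simp only [mul_zero, zero_mul, neg_zero] at h
  linarith
end

section
/- Let μ be a measure, 2 ≤ p < ∞, and let x, y ∈ L^p(μ) with x Birkhoff–James orthogonal to y (i.e., ‖x + βy‖_{L^p} ≥ ‖x‖_{L^p} for every scalar β ∈ ℂ). Then ‖x + y‖_{L^p}^p ≥ ‖x‖_{L^p}^p + (1/(2^{p-1} − 1))·‖y‖_{L^p}^p. -/
open MeasureTheory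

lemma aux_pt (p : ℝ) (hp2 : 2 ≤ p) (u v : ℂ) :
    2 * (‖u‖ ^ p + ‖v‖ ^ p) ≤ ‖u + v‖ ^ p + ‖u - v‖ ^ p := by
  have key : ∀ z : ℂ, ‖z‖ ^ p = (‖z‖ ^ 2) ^ (p / 2) := by
    intro z
    rw [← Real.rpow_natCast, ← Real.rpow_mul (norm_nonneg _)]
    congr 1; push_cast; ring
  have hq : 1 ≤ p / 2 := by linarith
  have h1 : (‖u‖ ^ 2) ^ (p / 2) + (‖v‖ ^ 2) ^ (p / 2) ≤ (‖u‖ ^ 2 + ‖v‖ ^ 2) ^ (p / 2) :=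
    Real.add_rpow_le_rpow_add (by positivity) (by positivity) hq
  have h2 := (convexOn_rpow hq).2
    (show ‖u + v‖ ^ 2 ∈ Set.Ici (0:ℝ) from Set.mem_Ici.2 (by positivity))
    (show ‖u - v‖ ^ 2 ∈ Set.Ici (0:ℝ) from Set.mem_Ici.2 (by positivity))
    (show (0:ℝ) ≤ 1 / 2 by norm_num) (show (0:ℝ) ≤ 1 / 2 by norm_num) (by norm_num)
  have h3 : ‖u‖ ^ 2 + ‖v‖ ^ 2 = (1 / 2 : ℝ) • ‖u + v‖ ^ 2 + (1 / 2 : ℝ) • ‖u - v‖ ^ 2 := by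
    have := parallelogram_law_with_norm ℝ u v
    simp only [smul_eq_mul]
    nlinarith
  rw [← h3] at h2
  simp only [smul_eq_mul] at h2
  rw [key u, key v, key (u + v), key (u - v)]
  linarith

lemma aux_norm_s2 {α : Type*} [MeasurableSpace α] (μ : Measure α)
    (p : ℝ) (hp2 : 2 ≤ p) (x : Lp ℂ (ENNReal.ofReal p) μ) :
    ‖x‖ ^ p = ∫ a, ‖x a‖ ^ p ∂μ := by
  have h0 : ENNReal.ofReal p ≠ 0 := by simp; linarith
  have hp : (ENNReal.ofReal p).toReal = p := ENNReal.toReal_ofReal (by linarith)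
  have hn : 0 ≤ ∫ a, ‖x a‖ ^ p ∂μ := integral_nonneg fun a => by positivity
  rw [Lp.norm_def, (Lp.memLp x).eLpNorm_eq_integral_rpow_norm h0 ENNReal.ofReal_ne_top, hp,
    ENNReal.toReal_ofReal (by positivity), ← Real.rpow_mul hn, inv_mul_cancel₀ (by linarith),
    Real.rpow_one]

lemma aux_int {α : Type*} [MeasurableSpace α] (μ : Measure α)
    (p : ℝ) (hp2 : 2 ≤ p) (x : Lp ℂ (ENNReal.ofReal p) μ) :
    Integrable (fun a => ‖x a‖ ^ p) μ := by
  have h0 : ENNReal.ofReal p ≠ 0 := by simp; linarith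
  have := (Lp.memLp x).integrable_norm_rpow h0 ENNReal.ofReal_ne_top
  rwa [ENNReal.toReal_ofReal (by linarith)] at this

lemma aux_Lp {α : Type*} [MeasurableSpace α] (μ : Measure α)
    (p : ℝ) (hp2 : 2 ≤ p) (u v : Lp ℂ (ENNReal.ofReal p) μ) :
    2 * (‖u‖ ^ p + ‖v‖ ^ p) ≤ ‖u + v‖ ^ p + ‖u - v‖ ^ p := by
  simp only [aux_norm_s2 μ p hp2]
  rw [← integral_add (aux_int μ p hp2 u) (aux_int μ p hp2 v),
    ← integral_add (aux_int μ p hp2 _) (aux_int μ p hp2 _), ← integral_const_mul]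
  refine integral_mono_ae (((aux_int μ p hp2 u).add (aux_int μ p hp2 v)).const_mul 2)
    ((aux_int μ p hp2 _).add (aux_int μ p hp2 _)) ?_
  filter_upwards [Lp.coeFn_add u v, Lp.coeFn_sub u v] with a h1 h2
  simp only [h1, h2, Pi.add_apply, Pi.sub_apply]
  exact aux_pt p hp2 _ _

/-- Lower Pythagorean inequality for `2 ≤ p < ∞`: if `x` is Birkhoff–James orthogonal to `y`
in `L^p(μ)`, then `‖x + y‖^p ≥ ‖x‖^p + (1/(2^{p-1} − 1))·‖y‖^p`. -/
theorem pythag_lower_large_p {α : Type*} [MeasurableSpace α] (μ : Measure α)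
    (p : ℝ) (hp2 : 2 ≤ p)
    (x y : Lp ℂ (ENNReal.ofReal p) μ)
    (horth : ∀ β : ℂ, ‖x‖ ≤ ‖x + β • y‖) :
    ‖x + y‖ ^ p ≥ ‖x‖ ^ p + (1 / (2 ^ (p - 1) - 1)) * ‖y‖ ^ p := by
  haveI : Fact (1 ≤ ENNReal.ofReal p) := ⟨by
    rw [← ENNReal.ofReal_one]; exact ENNReal.ofReal_le_ofReal (by linarith)⟩
  set r : ℝ := 2 ^ (p - 1) with hr
  have hr2 : 2 ≤ r := by
    have := Real.rpow_le_rpow_of_exponent_le (x := 2) (by norm_num) (show (1:ℝ) ≤ p - 1 by linarith)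
    simpa using this
  have h2p : (2:ℝ) ^ p = 2 * r := by
    rw [hr, Real.rpow_sub_one (by norm_num)]; ring
  set C : ℝ := 1 / (r - 1) with hC
  have hCr : C * r = C + 1 := by
    rw [hC]; field_simp [show r - 1 ≠ 0 by linarith]; ring
  -- norm of a multiple of y
  have step : ∀ z : Lp ℂ (ENNReal.ofReal p) μ,
      2 * (‖x + z‖ ^ p - ‖x‖ ^ p - C * ‖z‖ ^ p)
        ≤ ‖x + (2:ℂ) • z‖ ^ p - ‖x‖ ^ p - C * ‖(2:ℂ) • z‖ ^ p := by
    intro z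
    have h := aux_Lp μ p hp2 (x + z) z
    have e1 : x + z + z = x + (2:ℂ) • z := by rw [two_smul]; abel
    have e2 : x + z - z = x := by abel
    rw [e1, e2] at h
    have e3 : ‖(2:ℂ) • z‖ ^ p = 2 * r * ‖z‖ ^ p := by
      rw [norm_smul, Real.mul_rpow (norm_nonneg _) (norm_nonneg _), ← h2p]; simp
    rw [e3]
    have : C * (2 * r * ‖z‖ ^ p) = 2 * (C + 1) * ‖z‖ ^ p := by rw [← hCr]; ring
    rw [this]; linarith
  have iter : ∀ n : ℕ, ∀ z : Lp ℂ (ENNReal.ofReal p) μ,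
      2 ^ n * (‖x + z‖ ^ p - ‖x‖ ^ p - C * ‖z‖ ^ p)
        ≤ ‖x + ((2:ℂ) ^ n) • z‖ ^ p - ‖x‖ ^ p - C * ‖((2:ℂ) ^ n) • z‖ ^ p := by
    intro n
    induction n with
    | zero => intro z; simp
    | succ n ih =>
      intro z
      have h1 := step (((2:ℂ) ^ n) • z)
      rw [smul_smul, ← pow_succ'] at h1
      have h2 := ih z
      rw [pow_succ' (2:ℝ)]
      linarith
  have bound : ∀ n : ℕ, -(C * ‖y‖ ^ p) * (r⁻¹) ^ n ≤ ‖x + y‖ ^ p - ‖x‖ ^ p - C * ‖y‖ ^ p := by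
    intro n
    have h := iter n (((2:ℂ) ^ n)⁻¹ • y)
    have hne : (2:ℂ) ^ n ≠ 0 := pow_ne_zero _ two_ne_zero
    rw [smul_smul, mul_inv_cancel₀ hne, one_smul] at h
    refine le_trans ?_ h
    have h3 : ‖x‖ ^ p ≤ ‖x + ((2:ℂ) ^ n)⁻¹ • y‖ ^ p :=
      Real.rpow_le_rpow (norm_nonneg _) (horth _) (by linarith)
    have h4 : ‖((2:ℂ) ^ n)⁻¹ • y‖ ^ p = ((2 * r) ^ n)⁻¹ * ‖y‖ ^ p := by
      rw [norm_smul, Real.mul_rpow (norm_nonneg _) (norm_nonneg _), ← h2p, norm_inv, norm_pow,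
        Real.inv_rpow (by positivity), Real.rpow_pow_comm (by norm_num)]
      simp
    rw [h4]
    have h5 : (2:ℝ) ^ n * (C * (((2 * r) ^ n)⁻¹ * ‖y‖ ^ p)) = C * ‖y‖ ^ p * (r⁻¹) ^ n := by
      rw [mul_pow, mul_inv, inv_pow]
      have : (2:ℝ) ^ n ≠ 0 := by positivity
      field_simp
    have h6 : 0 ≤ (2:ℝ) ^ n * (‖x + ((2:ℂ) ^ n)⁻¹ • y‖ ^ p - ‖x‖ ^ p) :=
      mul_nonneg (by positivity) (by linarith)
    linarith
  have lim : Filter.Tendsto (fun n : ℕ => -(C * ‖y‖ ^ p) * (r⁻¹) ^ n) Filter.atTop (nhds 0) := by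
    have := (tendsto_pow_atTop_nhds_zero_of_lt_one (r := r⁻¹) (by positivity)
      (inv_lt_one_of_one_lt₀ (by linarith))).const_mul (-(C * ‖y‖ ^ p))
    simpa using this
  have := le_of_tendsto' lim bound
  linarith
end
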